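/- arXiv:1605.05630 — 3 statements merged into one kernel-verified Lean document; each statement's English description precedes it below -/
import Mathlib

section
/- There is a compact Hausdorff space X such that the weak Lindelöf number of its G_δ modification X_δ equals 𝔠⁺; in particular wL(X_δ) > 2^{ℵ₀}. -/
open Set Cardinal TopologicalSpace

universe u

/-!
Index by the initial ordinal `I` of `𝔠⁺` and fix, for every `a : I`, an injection `e a` of the at
most `𝔠` points below `a` into the Cantor set. Let `X` consist of the families of points of the
Cantor set, each carrying a flag, such that a raised flag at `a` forces the family to agree with
`e a` below `a`; this is a closed condition. As `𝔠⁺` does not inject into the Cantor set, every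
family takes some value at two distinct indices, so the coincidence sets `x_a = x_b` form a `G_δ`
cover of `X`. At most `𝔠` of them involve only indices below some `c`, and they all miss the
nonempty open set where the flag at `c` is raised.

Conversely, a `G_δ` set contains with each of its points all points agreeing with it at suitable
countably many coordinates. Hence `X_δ` has a dense set of size at most `(𝔠⁺)^ℵ₀ = 𝔠⁺`.
-/

open scoped Topology

universe v w

section GδModification

/-- The `G_δ` modification `X_δ` of a space `X`, as a second topology on the same type. -/
abbrev gδModification (X : Type*) [TopologicalSpace X] : TopologicalSpace X :=
  generateFrom {s : Set X | IsGδ s}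

/-- `WeakLindelofNumberLE t κ` means `wL(X, t) ≤ κ`. It is stated for all `κ`, although the weak
Lindelöf number itself is by convention infinite. -/
def WeakLindelofNumberLE {X : Type u} (t : TopologicalSpace X) (κ : Cardinal.{u}) : Prop :=
  ∀ 𝒰 : Set (Set X), (∀ u ∈ 𝒰, IsOpen[t] u) → ⋃₀ 𝒰 = Set.univ →
    ∃ 𝒱 ⊆ 𝒰, #𝒱 ≤ κ ∧ @Dense X t (⋃₀ 𝒱)

theorem dense_gδModification_iff {X : Type*} [TopologicalSpace X] {s : Set X} :
    @Dense X (gδModification X) s ↔ ∀ G : Set X, IsGδ G → G.Nonempty → (G ∩ s).Nonempty :=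
  have hbasis : @IsTopologicalBasis X (gδModification X) {G | IsGδ G} :=
    @isTopologicalBasis_of_subbasis_of_finiteInter X (gδModification X) _ rfl
      ⟨IsGδ.univ, fun _ hs _ ht => hs.inter ht⟩
  @IsTopologicalBasis.dense_iff X (gδModification X) _ hbasis s

theorem dense_of_dense_gδModification {X : Type*} [TopologicalSpace X] {s : Set X}
    (hs : @Dense X (gδModification X) s) : Dense s :=
  dense_iff_inter_open.2 fun U hU => dense_gδModification_iff.1 hs U hU.isGδ

theorem weakLindelofNumberLE_mk_of_dense {X : Type u} {t : TopologicalSpace X} {D : Set X}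
    (hD : Dense D) : WeakLindelofNumberLE t #D := by
  intro 𝒰 _ h𝒰
  have hcover : ∀ x : D, ∃ u ∈ 𝒰, x.1 ∈ u := fun x => mem_sUnion.1 (h𝒰.symm ▸ mem_univ x.1)
  choose f hf hmem using hcover
  exact ⟨range f, range_subset_iff.2 hf, mk_range_le,
    hD.mono fun x hx => ⟨f ⟨x, hx⟩, mem_range_self _, hmem ⟨x, hx⟩⟩⟩

theorem WeakLindelofNumberLE.mono {X : Type u} {t : TopologicalSpace X} {κ μ : Cardinal.{u}}
    (h : WeakLindelofNumberLE t κ) (hκμ : κ ≤ μ) : WeakLindelofNumberLE t μ :=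
  fun 𝒰 hopen hcover =>
    let ⟨𝒱, hsub, hcard, hdense⟩ := h 𝒰 hopen hcover
    ⟨𝒱, hsub, hcard.trans hκμ, hdense⟩

end GδModification

section PiSubspace

variable {ι : Type u} {A : ι → Type v} [∀ i, TopologicalSpace (A i)]

theorem exists_finset_forall_eq_imp_mem_of_isOpen {K : Set (∀ i, A i)} {U : Set K}
    (hU : IsOpen U) {x : K} (hx : x ∈ U) :
    ∃ F : Finset ι, ∀ y : K, (∀ i ∈ F, y.1 i = x.1 i) → y ∈ U := by
  obtain ⟨V, hV, rfl⟩ := isOpen_induced_iff.1 hU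
  obtain ⟨F, w, hw, hF⟩ := isOpen_pi_iff.1 hV x.1 hx
  exact ⟨F, fun y hy => hF fun i hi => (hy i hi).symm ▸ (hw i hi).2⟩

theorem exists_countable_forall_eq_imp_mem_of_isGδ {K : Set (∀ i, A i)} {G : Set K}
    (hG : IsGδ G) {x : K} (hx : x ∈ G) :
    ∃ S : Set ι, S.Countable ∧ ∀ y : K, (∀ i ∈ S, y.1 i = x.1 i) → y ∈ G := by
  obtain ⟨U, hU, rfl⟩ := hG.eq_iInter_nat
  choose F hF using fun n =>
    exists_finset_forall_eq_imp_mem_of_isOpen (hU n) (mem_iInter.1 hx n)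
  exact ⟨⋃ n, F n, countable_iUnion fun n => (F n).countable_toSet, fun y hy =>
    mem_iInter.2 fun n => hF n y fun i hi => hy i (mem_iUnion_of_mem n hi)⟩

theorem exists_dense_gδModification_mk_le [Nonempty ι] (K : Set (∀ i, A i)) :
    ∃ D : Set K, @Dense K (gδModification K) D ∧ #D ≤ #(Σ i, A i) ^ ℵ₀ := by
  -- A sequence in `Σ i, A i` prescribes values at countably many coordinates; `D` picks one point
  -- of `K` for every prescription that `K` can meet.
  let Meets (p : ℕ → Σ i, A i) (x : K) : Prop := ∀ n, x.1 (p n).1 = (p n).2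
  let d (p : {p // ∃ x, Meets p x}) : K := p.2.choose
  have hd : ∀ p, Meets p.1 (d p) := fun p => p.2.choose_spec
  refine ⟨range d, dense_gδModification_iff.2 ?_, ?_⟩
  · rintro G hG ⟨x, hx⟩
    obtain ⟨S, hS, hSG⟩ := exists_countable_forall_eq_imp_mem_of_isGδ hG hx
    obtain ⟨s, hs⟩ := countable_iff_exists_subset_range.1 hS
    let p : {p // ∃ x, Meets p x} := ⟨fun n => ⟨s n, x.1 (s n)⟩, x, fun _ => rfl⟩
    refine ⟨d p, hSG _ fun i hi => ?_, mem_range_self p⟩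
    obtain ⟨n, rfl⟩ := hs hi
    exact hd p n
  · calc #(range d) ≤ #{p // ∃ x, Meets p x} := mk_range_le
      _ ≤ #(ℕ → Σ i, A i) := mk_subtype_le _
      _ = #(Σ i, A i) ^ ℵ₀ := by simp only [mk_pi, prod_const, mk_nat, lift_aleph0, lift_uzero]

theorem weakLindelofNumberLE_gδModification_mk_sigma_power [Nonempty ι] (K : Set (∀ i, A i)) :
    WeakLindelofNumberLE (gδModification K) (#(Σ i, A i) ^ ℵ₀) :=
  let ⟨_, hdense, hcard⟩ := exists_dense_gδModification_mk_le K
  (weakLindelofNumberLE_mk_of_dense (t := gδModification K) hdense).mono hcard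

end PiSubspace

section Cofinality

theorem exists_forall_lt_of_lift_mk_lt_cof {I : Type u} {J : Type w} [LinearOrder I] {f : J → I}
    (hJ : lift.{u} #J < lift.{w} (Order.cof I)) : ∃ a, ∀ j, f j < a := by
  have hrange : ¬ IsCofinal (range f) := fun h =>
    (mk_range_le_lift.trans_lt hJ).not_ge (lift_le.2 (Order.cof_le h))
  simpa only [not_isCofinal_iff, forall_mem_range] using hrange

theorem mk_fun_le_of_mk_lt_cof {I J : Type u} [LinearOrder I] {κ : Cardinal.{u}}
    (hJ : #J < Order.cof I) (hI : ∀ a : I, #(Iio a) ≤ κ) : #(J → I) ≤ #I * κ ^ #J := by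
  let extend (p : Σ a : I, J → Iio a) (j : J) : I := p.2 j
  have hsurj : Function.Surjective extend := fun f =>
    let ⟨a, ha⟩ := exists_forall_lt_of_lift_mk_lt_cof (f := f) (lift_lt.2 hJ)
    ⟨⟨a, fun j => ⟨f j, ha j⟩⟩, rfl⟩
  calc #(J → I) ≤ #(Σ a : I, J → Iio a) := mk_le_of_surjective hsurj
    _ = sum fun a : I => #(Iio a) ^ #J := by simp only [mk_sigma, mk_pi, prod_const, lift_id]
    _ ≤ sum fun _ : I => κ ^ #J := sum_le_sum _ _ fun a => power_le_power_right (hI a)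
    _ = #I * κ ^ #J := sum_const' _ _

theorem mk_Iio_toType_ord_succ_le {κ : Cardinal.{u}} (a : (Order.succ κ).ord.ToType) :
    #(Iio a) ≤ κ :=
  Order.lt_succ_iff.1 ((mk_Iio_lt a (by simp)).trans_eq (mk_ord_toType _))

theorem cof_toType_ord_succ {κ : Cardinal.{u}} (hκ : ℵ₀ ≤ κ) :
    Order.cof (Order.succ κ).ord.ToType = Order.succ κ := by
  rw [Ordinal.cof_toType, (isRegular_succ hκ).cof_ord]

theorem succ_power_le_succ {κ μ : Cardinal.{u}} (hκ : ℵ₀ ≤ κ) (hμ : κ ^ μ ≤ κ) :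
    Order.succ κ ^ μ ≤ Order.succ κ := by
  let I := (Order.succ κ).ord.ToType
  have hcard : #I = Order.succ κ := mk_ord_toType _
  have hlt : #μ.out < Order.cof I := by
    rw [cof_toType_ord_succ hκ, mk_out]
    exact (cantor' μ (one_lt_aleph0.trans_le hκ)).trans (Order.lt_succ_of_le hμ)
  calc Order.succ κ ^ μ = #(μ.out → I) := by
        simp only [mk_pi, prod_const, lift_id, hcard, mk_out]
    _ ≤ #I * κ ^ #μ.out := mk_fun_le_of_mk_lt_cof hlt mk_Iio_toType_ord_succ_le
    _ ≤ Order.succ κ * κ := by rw [hcard, mk_out]; gcongr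
    _ = Order.succ κ :=
      mul_eq_left (hκ.trans (Order.le_succ κ)) (Order.le_succ κ) (aleph0_pos.trans_le hκ).ne'

end Cofinality

section FlaggedFamilies

variable {I : Type u} {C : Type v}

/-- The families of points of `C`, each carrying a Boolean flag, in which a raised flag at `a`
forces the points below `a` to be the values of `e a`. -/
def flaggedFamilies [LT I] (e : I → I → C) : Set (I → C × Bool) :=
  {x | ∀ a, (x a).2 = true → ∀ b < a, (x b).1 = e a b}

theorem isClosed_flaggedFamilies [LT I] [TopologicalSpace C] [T2Space C] (e : I → I → C) :
    IsClosed (flaggedFamilies e) := by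
  simp only [flaggedFamilies, ofPred_forall]
  refine isClosed_iInter fun a => isClosed_imp ?_ ?_
  · exact (isOpen_discrete {true}).preimage
      (by fun_prop : Continuous fun x : I → C × Bool => (x a).2)
  · simp only [ofPred_forall]
    exact isClosed_iInter fun b => isClosed_iInter fun _ =>
      isClosed_eq (by fun_prop) continuous_const

theorem exists_mem_flaggedFamilies_flag [LT I] (e : I → I → C) (c : I) :
    ∃ x ∈ flaggedFamilies e, (x c).2 = true := by
  classical
  refine ⟨fun b => (e c b, decide (b = c)), fun a ha b _ => ?_, decide_eq_true rfl⟩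
  obtain rfl : a = c := of_decide_eq_true ha
  rfl

theorem injOn_Iio_of_mem_flaggedFamilies [Preorder I] {e : I → I → C} {x : I → C × Bool} {c : I}
    (he : InjOn (e c) (Iio c)) (hx : x ∈ flaggedFamilies e) (hc : (x c).2 = true) :
    InjOn (fun a => (x a).1) (Iio c) :=
  he.congr fun a ha => (hx c hc a ha).symm

theorem continuous_flaggedFamilies_apply [LT I] [TopologicalSpace C] {e : I → I → C} (a : I) :
    Continuous fun x : flaggedFamilies e => x.1 a :=
  (continuous_apply a).comp continuous_subtype_val

/-- The flagged families taking the same value at both indices of `p`, flags disregarded. Over the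
pairs of distinct indices, these sets form the cover of the `G_δ` modification that has no small
subfamily with dense union. -/
def coincidenceSet [LT I] (e : I → I → C) (p : I × I) : Set (flaggedFamilies e) :=
  {x | (x.1 p.1).1 = (x.1 p.2).1}

theorem isGδ_coincidenceSet [LT I] [TopologicalSpace C] (hdiag : IsGδ (diagonal C))
    (e : I → I → C) (p : I × I) : IsGδ (coincidenceSet e p) :=
  hdiag.preimage ((continuous_flaggedFamilies_apply p.1).fst.prodMk
    (continuous_flaggedFamilies_apply p.2).fst)

theorem sUnion_coincidenceSet_eq_univ [LT I] (hC : ∀ f : I → C, ¬ Function.Injective f)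
    (e : I → I → C) : ⋃₀ (coincidenceSet e '' {p | p.1 ≠ p.2}) = Set.univ := by
  refine eq_univ_of_forall fun x => ?_
  obtain ⟨a, b, hab, hne⟩ := Function.not_injective_iff.1 (hC fun a => (x.1 a).1)
  exact ⟨_, ⟨(a, b), hne, rfl⟩, hab⟩

theorem not_dense_sUnion_coincidenceSet [LinearOrder I] [TopologicalSpace C] {e : I → I → C}
    (he : ∀ c, InjOn (e c) (Iio c)) {𝒱 : Set (Set (flaggedFamilies e))}
    (h𝒱 : 𝒱 ⊆ coincidenceSet e '' {p | p.1 ≠ p.2}) (hcard : #𝒱 < lift.{v} (Order.cof I)) :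
    ¬ Dense (⋃₀ 𝒱) := by
  intro hdense
  choose p hne hp using fun V : 𝒱 => h𝒱 V.2
  obtain ⟨c, hc⟩ : ∃ c, ∀ V, max (p V).1 (p V).2 < c :=
    exists_forall_lt_of_lift_mk_lt_cof (by rwa [lift_id'.{u, v}, lift_umax.{u, v}])
  have hflag_open : IsOpen {x : flaggedFamilies e | (x.1 c).2 = true} :=
    (isOpen_discrete {true}).preimage (continuous_flaggedFamilies_apply c).snd
  obtain ⟨z, hz, hzc⟩ := exists_mem_flaggedFamilies_flag e c
  obtain ⟨x, hxc, V, hV, hxV⟩ := hdense.inter_open_nonempty _ hflag_open ⟨⟨z, hz⟩, hzc⟩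
  obtain ⟨hlt₁, hlt₂⟩ := max_lt_iff.1 (hc ⟨V, hV⟩)
  have hxp : x ∈ coincidenceSet e (p ⟨V, hV⟩) := (hp ⟨V, hV⟩).symm ▸ hxV
  exact hne ⟨V, hV⟩ (injOn_Iio_of_mem_flaggedFamilies (he c) x.2 hxc hlt₁ hlt₂ hxp)

theorem not_weakLindelofNumberLE_flaggedFamilies [LinearOrder I] [TopologicalSpace C]
    {e : I → I → C} {κ : Cardinal.{max u v}} (hdiag : IsGδ (diagonal C))
    (hC : ∀ f : I → C, ¬ Function.Injective f) (he : ∀ c, InjOn (e c) (Iio c))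
    (hκ : κ < lift.{v} (Order.cof I)) :
    ¬ WeakLindelofNumberLE (gδModification (flaggedFamilies e)) κ := by
  intro hwL
  obtain ⟨𝒱, h𝒱, hcard, hdense⟩ := hwL _
    (forall_mem_image.2 fun p _ => isOpen_generateFrom_of_mem (isGδ_coincidenceSet hdiag e p))
    (sUnion_coincidenceSet_eq_univ hC e)
  exact not_dense_sUnion_coincidenceSet he h𝒱 (hcard.trans_lt hκ)
    (dense_of_dense_gδModification hdense)

end FlaggedFamilies

section CantorSpace

theorem exists_injOn_cantorSpace {α : Type u} {s : Set α} (hs : #s ≤ continuum) :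
    ∃ f : α → ℕ → Bool, InjOn f s := by
  have hlift : lift.{0} #s ≤ lift.{u} #(ℕ → Bool) := by simpa using hs
  obtain ⟨g⟩ := lift_mk_le'.1 hlift
  exact exists_injOn_iff_injective.2 ⟨g, g.injective⟩

theorem not_injective_cantorSpace {α : Type u} (hα : continuum < #α) (f : α → ℕ → Bool) :
    ¬ Function.Injective f := fun hf =>
  hα.not_ge (by simpa using lift_mk_le_lift_mk_of_injective hf)

theorem mk_sigma_cantorSpace_prod_bool {α : Type u} (hα : continuum ≤ #α) :
    #(Σ _ : α, (ℕ → Bool) × Bool) = #α := by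
  have hmul : #α * continuum = #α :=
    mul_eq_left (aleph0_le_continuum.trans hα) hα continuum_ne_zero
  simpa using hmul

end CantorSpace

/-- There is a compact Hausdorff space `X` such that the weak Lindelöf number of its G_δ
modification `X_δ` equals `𝔠⁺`: every open cover of `X_δ` has a subfamily of size at most
`𝔠⁺` with dense union in `X_δ`, but some open cover of `X_δ` has no subfamily of size at
most `𝔠` (in particular, none of size at most `2^ℵ₀`) with dense union in `X_δ`. -/
theorem exists_compact_wL_gdelta_continuum_succ :
    ∃ (X : Type u) (tX : TopologicalSpace X), @CompactSpace X tX ∧ @T2Space X tX ∧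
      (∀ 𝒰 : Set (Set X),
        (∀ u ∈ 𝒰, @IsOpen X (TopologicalSpace.generateFrom {s : Set X | @IsGδ X tX s}) u) →
        ⋃₀ 𝒰 = Set.univ →
        ∃ 𝒱 ⊆ 𝒰, #𝒱 ≤ Order.succ continuum ∧
          @Dense X (TopologicalSpace.generateFrom {s : Set X | @IsGδ X tX s}) (⋃₀ 𝒱)) ∧
      (∃ 𝒰 : Set (Set X),
        (∀ u ∈ 𝒰, @IsOpen X (TopologicalSpace.generateFrom {s : Set X | @IsGδ X tX s}) u) ∧
        ⋃₀ 𝒰 = Set.univ ∧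
        ∀ 𝒱 ⊆ 𝒰, #𝒱 ≤ continuum →
          ¬ @Dense X (TopologicalSpace.generateFrom {s : Set X | @IsGδ X tX s}) (⋃₀ 𝒱)) := by
  let I : Type u := (Order.succ continuum).ord.ToType
  have hI : #I = Order.succ continuum := mk_ord_toType _
  have hcof : Order.cof I = Order.succ continuum := cof_toType_ord_succ aleph0_le_continuum
  have : Nonempty I := mk_ne_zero_iff.1 (hI ▸ (Order.bot_lt_succ continuum).ne')
  choose e he using fun c : I => exists_injOn_cantorSpace (mk_Iio_toType_ord_succ_le c)
  have hpow : #(Σ _ : I, (ℕ → Bool) × Bool) ^ ℵ₀ ≤ Order.succ continuum := by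
    rw [mk_sigma_cantorSpace_prod_bool (hI ▸ Order.le_succ continuum), hI]
    exact succ_power_le_succ aleph0_le_continuum continuum_power_aleph0.le
  have hupper : WeakLindelofNumberLE (gδModification (flaggedFamilies e)) (Order.succ continuum) :=
    (weakLindelofNumberLE_gδModification_mk_sigma_power _).mono hpow
  have hlower : ¬ WeakLindelofNumberLE (gδModification (flaggedFamilies e)) continuum :=
    not_weakLindelofNumberLE_flaggedFamilies isClosed_diagonal.isGδ
      (not_injective_cantorSpace (hI ▸ Order.lt_succ continuum)) he (by simp [hcof])
  refine ⟨flaggedFamilies e, inferInstance,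
    isCompact_iff_compactSpace.1 (isClosed_flaggedFamilies e).isCompact, inferInstance, hupper, ?_⟩
  simpa only [WeakLindelofNumberLE, not_forall, not_exists, not_and, exists_prop] using hlower
end

section
/- Let X be an initially κ-compact Hausdorff space with tightness t(X) ≤ κ and wL_c(X) ≤ κ. Then the weak Lindelöf number of the topology generated by the G^c_κ subsets of X is at most 2^κ; that is, every cover of X by G^c_κ sets has a subfamily of size at most 2^κ whose union is dense in that topology. -/
/-!
Choose `φ` such that `φ T` is a member of `𝒰` containing `T` whenever there is one, and present each
member of `𝒰` by a directed family of at most `κ` open sets. A closing-off argument yields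
`A ⊆ X` with `#A ≤ 2 ^ κ` such that a family of at most `κ` open sets taken from the presentations
of the sets `φ (⋂ C ∈ 𝒞, closure C)`, where `𝒞` consists of at most `κ` subsets of `A` of size at
most `κ`, has dense union as soon as the closure of its union contains `A`. These sets
`φ (⋂ C ∈ 𝒞, closure C)` are the required subfamily. By tightness they cover `closure A`. If they
all missed a `G^c_κ` set `G ∋ p`, then by initial `κ`-compactness every point of `closure A` would
lie in one of the presenting open sets disjoint from some open `M ⊇ G`, with a single `M` working
for all of `closure A`; `wL_c(X) ≤ κ` would then give a family of at most `κ` open sets whose union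
is dense although it misses the neighbourhood `M` of `p`.
-/

open Set Cardinal TopologicalSpace

universe u

/-- `X` is initially `κ`-compact: every open cover of size at most `κ` has a finite
subcover. -/
def InitiallyCompact (κ : Cardinal.{u}) (X : Type u) [TopologicalSpace X] : Prop :=
  ∀ 𝒰 : Set (Set X), (∀ u ∈ 𝒰, IsOpen u) → ⋃₀ 𝒰 = Set.univ → #𝒰 ≤ κ →
    ∃ 𝒱 ⊆ 𝒰, 𝒱.Finite ∧ ⋃₀ 𝒱 = Set.univ

/-- The tightness of `X` is at most `κ`. -/
def TightnessLE (X : Type u) [TopologicalSpace X] (κ : Cardinal.{u}) : Prop :=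
  ∀ (A : Set X) (x : X), x ∈ closure A → ∃ B ⊆ A, #B ≤ κ ∧ x ∈ closure B

/-- `wL_c(X) ≤ κ`: every open cover of any closed set `F` has a subfamily of size at most
`κ` whose union has closure containing `F`. -/
def WLcLE (X : Type u) [TopologicalSpace X] (κ : Cardinal.{u}) : Prop :=
  ∀ F : Set X, IsClosed F → ∀ 𝒰 : Set (Set X), (∀ u ∈ 𝒰, IsOpen u) → F ⊆ ⋃₀ 𝒰 →
    ∃ 𝒱 ⊆ 𝒰, #𝒱 ≤ κ ∧ F ⊆ closure (⋃₀ 𝒱)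

/-- `G` is a `G^c_κ` set: an intersection of at most `κ` open sets which also equals the
intersection of their closures. -/
def IsGcKappa (κ : Cardinal.{u}) {X : Type u} [TopologicalSpace X] (G : Set X) : Prop :=
  ∃ (ι : Type u) (U : ι → Set X), #ι ≤ κ ∧ (∀ i, IsOpen (U i)) ∧
    G = ⋂ i, U i ∧ G = ⋂ i, closure (U i)

section SmallSubsets

/-- The subsets of `s` of size at most `κ`, usually written `[s]^{≤ κ}`. The closing-off argument
ranges over these. -/
def smallSubsets (κ : Cardinal.{u}) {α : Type u} (s : Set α) : Set (Set α) :=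
  {t | t ⊆ s ∧ #t ≤ κ}

/-- The operators on sets that a closing-off argument of length `κ⁺` can handle: monotone ones whose
values are determined by the subsets of size at most `κ`, and which preserve the bound `μ` on
cardinalities. -/
structure IsSmallDetermined (κ μ : Cardinal.{u}) {α β : Type u} (Φ : Set α → Set β) : Prop where
  monotone : Monotone Φ
  exists_small : ∀ ⦃A : Set α⦄ ⦃y : β⦄, y ∈ Φ A → ∃ B ∈ smallSubsets κ A, y ∈ Φ B
  mk_le : ∀ ⦃A : Set α⦄, #A ≤ μ → #(Φ A) ≤ μ

variable {κ μ : Cardinal.{u}} {α β γ : Type u}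

theorem mk_iUnion_le_of_le {ι : Type u} (hμ : ℵ₀ ≤ μ) (hι : #ι ≤ μ) {s : ι → Set α}
    (hs : ∀ i, #(s i) ≤ μ) : #(⋃ i, s i) ≤ μ :=
  calc #(⋃ i, s i) ≤ #ι * ⨆ i, #(s i) := mk_iUnion_le s
    _ ≤ μ * μ := mul_le_mul' hι (ciSup_le' hs)
    _ = μ := mul_eq_self hμ

theorem isSmallDetermined_smallSubsets (hμ : ℵ₀ ≤ μ) (hμκ : μ ^ κ ≤ μ) :
    IsSmallDetermined κ μ (smallSubsets κ : Set α → Set (Set α)) where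
  monotone _ _ hst _ ht := ⟨ht.1.trans hst, ht.2⟩
  exists_small _ t ht := ⟨t, ht, Subset.rfl, ht.2⟩
  mk_le s hs := (mk_bounded_subset_le s κ).trans <|
    (power_le_power_right (max_le hs hμ)).trans hμκ

theorem isSmallDetermined_biUnion (hκ : 1 ≤ κ) (hμ : ℵ₀ ≤ μ) {g : α → Set β}
    (hg : ∀ a, #(g a) ≤ μ) : IsSmallDetermined κ μ fun A => ⋃ a ∈ A, g a where
  monotone _ _ hAB := biUnion_subset_biUnion_left hAB
  exists_small A y hy := by
    obtain ⟨a, ha, hya⟩ := mem_iUnion₂.1 hy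
    exact ⟨{a}, ⟨singleton_subset_iff.2 ha, by simpa using hκ⟩, by simpa using hya⟩
  mk_le A hA := by
    rw [biUnion_eq_iUnion]
    exact mk_iUnion_le_of_le hμ hA fun a => hg a

theorem isSmallDetermined_image (hκ : 1 ≤ κ) (hμ : ℵ₀ ≤ μ) (f : α → β) :
    IsSmallDetermined κ μ (image f) := by
  rw [show image f = fun A => ⋃ a ∈ A, {f a} from funext (image_eq_iUnion f)]
  exact isSmallDetermined_biUnion hκ hμ fun a => by simpa using one_le_aleph0.trans hμ

theorem IsSmallDetermined.comp (hκ : ℵ₀ ≤ κ) {Ψ : Set β → Set γ} {Φ : Set α → Set β}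
    (hΨ : IsSmallDetermined κ μ Ψ) (hΦ : IsSmallDetermined κ μ Φ) :
    IsSmallDetermined κ μ (Ψ ∘ Φ) where
  monotone := hΨ.monotone.comp hΦ.monotone
  exists_small A z hz := by
    obtain ⟨D, ⟨hDA, hD⟩, hzD⟩ := hΨ.exists_small hz
    choose B hBA hDB using fun y : D => hΦ.exists_small (hDA y.2)
    refine ⟨⋃ y, B y, ⟨iUnion_subset fun y => (hBA y).1,
      mk_iUnion_le_of_le hκ hD fun y => (hBA y).2⟩, hΨ.monotone (fun y hy => ?_) hzD⟩
    exact hΦ.monotone (subset_iUnion B ⟨y, hy⟩) (hDB ⟨y, hy⟩)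
  mk_le _ hA := hΨ.mk_le (hΦ.mk_le hA)

theorem exists_mem_forall_subset_of_subset {𝒰 : Set (Set α)} (h𝒰 : 𝒰.Nonempty) (T : Set α) :
    ∃ V ∈ 𝒰, ∀ U ∈ 𝒰, T ⊆ U → T ⊆ V := by
  by_contra! h
  obtain ⟨U₀, hU₀⟩ := h𝒰
  obtain ⟨U, hU, hTU, -⟩ := h U₀ hU₀
  obtain ⟨_, -, -, hT⟩ := h U hU
  exact hT hTU

theorem exists_subset_range_of_mk_le [Nonempty α] {s : Set α} (h : #s ≤ #β) :
    ∃ f : β → α, s ⊆ range f := by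
  obtain ⟨e⟩ := h
  refine ⟨Function.extend e Subtype.val fun _ => Classical.arbitrary α, fun x hx => ?_⟩
  exact ⟨e ⟨x, hx⟩, e.injective.extend_apply _ _ _⟩

theorem mk_wType_set_prod_le {K M : Type u} (hM : ℵ₀ ≤ #M) (hMK : #M ^ #K ≤ #M) :
    #(WType fun p : Set K × M => p.1) ≤ #M := by
  have two_pow_le : 2 ^ #K ≤ #M := (power_le_power_right (ofNat_le_aleph0.trans hM)).trans hMK
  refine WType.cardinalMk_le_of_le ?_
  calc (Cardinal.sum fun p : Set K × M => #M ^ #p.1)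
      ≤ Cardinal.sum fun _ : Set K × M => #M := sum_le_sum _ _ fun p =>
        (power_le_power_left (aleph0_pos.trans_le hM).ne' (mk_set_le p.1)).trans hMK
    _ = 2 ^ #K * #M * #M := by simp
    _ ≤ #M * #M * #M := by gcongr
    _ = #M := by simp only [mul_eq_self hM]

/-- The set is the range of an evaluation of well-founded trees, in which a node labelled `(S, m)`
has the values of its `S`-indexed children as a small set `B` and takes as its value the `m`-th
element of `Φ B`. -/
theorem IsSmallDetermined.exists_map_subset [Nonempty α] (hμ : ℵ₀ ≤ μ) (hμκ : μ ^ κ ≤ μ)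
    {Φ : Set α → Set α} (hΦ : IsSmallDetermined κ μ Φ) : ∃ A : Set α, #A ≤ μ ∧ Φ A ⊆ A := by
  induction κ using Cardinal.inductionOn with | _ K
  induction μ using Cardinal.inductionOn with | _ M
  have exists_enum (B : Set α) : ∃ f : M → α, #B ≤ #M → Φ B ⊆ range f := by
    by_cases hB : #B ≤ #M
    · exact (exists_subset_range_of_mk_le (hΦ.mk_le hB)).imp fun f hf _ => hf
    · exact ⟨fun _ => Classical.arbitrary α, fun h => absurd h hB⟩
  choose enum henum using exists_enum
  let eval : WType (fun p : Set K × M => p.1) → α := WType.elim α fun p => enum (range p.2) p.1.2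
  refine ⟨range eval, mk_range_le.trans (mk_wType_set_prod_le hμ hμκ), fun y hy => ?_⟩
  obtain ⟨B, ⟨hBA, hB⟩, hyB⟩ := hΦ.exists_small hy
  obtain ⟨S, hS⟩ := le_mk_iff_exists_set.1 hB
  obtain ⟨e⟩ := Cardinal.eq.1 hS
  choose tree htree using fun b : B => hBA b.2
  have hKM : #K ≤ #M := (cantor _).le.trans <|
    (power_le_power_right (ofNat_le_aleph0.trans hμ)).trans hμκ
  obtain ⟨m, rfl⟩ := henum B (hB.trans hKM) hyB
  have range_eval : range (fun s => eval (tree (e s))) = B := by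
    simp only [htree]
    exact (e.surjective.range_comp Subtype.val).trans Subtype.range_coe
  exact ⟨WType.mk (S, m) fun s => tree (e s), congrArg (enum · m) range_eval⟩

end SmallSubsets

section GcKappa

variable {κ μ : Cardinal.{u}} {X : Type u} [TopologicalSpace X]

theorem isGcKappa_univ : IsGcKappa κ (Set.univ : Set X) :=
  ⟨PEmpty, PEmpty.elim, by simp, fun i => i.elim, by simp, by simp⟩

theorem IsGcKappa.inter (hκ : ℵ₀ ≤ κ) {G H : Set X} (hG : IsGcKappa κ G)
    (hH : IsGcKappa κ H) : IsGcKappa κ (G ∩ H) := by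
  obtain ⟨ι, U, hι, hUo, hU, hU'⟩ := hG
  obtain ⟨ι', V, hι', hVo, hV, hV'⟩ := hH
  refine ⟨ι ⊕ ι', Sum.elim U V, ?_, Sum.forall.2 ⟨hUo, hVo⟩, ?_, ?_⟩
  · simpa using add_le_of_le hκ hι hι'
  · simp only [iInter_sum, Sum.elim_inl, Sum.elim_inr, ← hU, ← hV]
  · simp only [iInter_sum, Sum.elim_inl, Sum.elim_inr, ← hU', ← hV']

theorem isTopologicalBasis_isGcKappa (hκ : ℵ₀ ≤ κ) :
    @IsTopologicalBasis X (generateFrom {s : Set X | IsGcKappa κ s})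
      {s : Set X | IsGcKappa κ s} :=
  @isTopologicalBasis_of_subbasis_of_finiteInter X (generateFrom _) _ rfl
    ⟨isGcKappa_univ, fun _ hs _ ht => hs.inter hκ ht⟩

/-- `𝒩` presents `G` as a `G^c_κ` set, as in `IsGcKappa` but by a downward directed family, so that
compactness arguments produce single members of `𝒩`. The two inclusions amount to
`G = ⋂₀ 𝒩 = ⋂ N ∈ 𝒩, closure N`. -/
structure IsGcBase (κ : Cardinal.{u}) (𝒩 : Set (Set X)) (G : Set X) : Prop where
  mk_le : #𝒩 ≤ κ
  nonempty : 𝒩.Nonempty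
  directedOn : DirectedOn (· ⊇ ·) 𝒩
  isOpen : ∀ N ∈ 𝒩, IsOpen N
  subset : ∀ N ∈ 𝒩, G ⊆ N
  biInter_closure_subset : ⋂ N ∈ 𝒩, closure N ⊆ G

theorem IsGcKappa.exists_isGcBase (hκ : ℵ₀ ≤ κ) {G : Set X} (hG : IsGcKappa κ G) :
    ∃ 𝒩, IsGcBase κ 𝒩 G := by
  classical
  obtain ⟨ι, U, hι, hUo, hU, hU'⟩ := hG
  let N : Finset ι → Set X := fun s => ⋂ i ∈ s, U i
  have hN : Antitone N := fun s t hst => biInter_subset_biInter_left hst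
  refine ⟨range N, ?_, range_nonempty N, hN.directed_ge.directedOn_range,
    forall_mem_range.2 fun s => isOpen_biInter_finset fun i _ => hUo i,
    forall_mem_range.2 fun s => ?_, ?_⟩
  · calc #(range N) ≤ #(Finset ι) := mk_range_le
      _ ≤ #(List ι) := mk_le_of_surjective List.toFinset_surjective
      _ ≤ max ℵ₀ #ι := mk_list_le_max ι
      _ ≤ κ := max_le hκ hι
  · exact hU.trans_subset (subset_iInter₂ fun i _ => iInter_subset U i)
  · rw [biInter_range, hU']
    exact subset_iInter fun i => (iInter_subset _ {i}).trans (by simp [N])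

theorem InitiallyCompact.exists_finset_iUnion_eq_univ {ι : Type u} (hX : InitiallyCompact κ X)
    (hι : #ι ≤ κ) {U : ι → Set X} (hU : ∀ i, IsOpen (U i)) (hcov : ⋃ i, U i = Set.univ) :
    ∃ s : Finset ι, ⋃ i ∈ s, U i = Set.univ := by
  obtain ⟨𝒱, h𝒱, hfin, hcov'⟩ := hX (range U) (forall_mem_range.2 hU)
    (by rwa [sUnion_range]) (mk_range_le.trans hι)
  rw [← image_univ] at h𝒱
  obtain ⟨s, -, hs, rfl⟩ := exists_subset_image_finite_and.1 ⟨𝒱, h𝒱, hfin, rfl⟩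
  exact ⟨hs.toFinset, by simpa using hcov'⟩

theorem InitiallyCompact.exists_subset_of_directed {ι : Type u} [Nonempty ι]
    (hX : InitiallyCompact κ X) (hι : #ι ≤ κ) {F : Set X} (hF : IsClosed F) {U : ι → Set X}
    (hU : ∀ i, IsOpen (U i)) (hdir : Directed (· ⊆ ·) U) (hcov : F ⊆ ⋃ i, U i) :
    ∃ i, F ⊆ U i := by
  obtain ⟨s, hs⟩ := hX.exists_finset_iUnion_eq_univ hι (U := fun i => U i ∪ Fᶜ)
    (fun i => (hU i).union hF.isOpen_compl) (by
      rwa [← iUnion_union, union_comm, ← compl_subset_iff_union, compl_compl])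
  obtain ⟨i, hi⟩ := hdir.finset_le s
  refine ⟨i, fun x hx => ?_⟩
  obtain ⟨j, hj, hxj⟩ := mem_iUnion₂.1 (hs ▸ mem_univ x : x ∈ ⋃ j ∈ s, U j ∪ Fᶜ)
  exact hi j hj (hxj.resolve_right fun h => h hx)

theorem IsGcBase.exists_disjoint (hκ : ℵ₀ ≤ κ) (hX : InitiallyCompact κ X)
    {𝒩 ℳ : Set (Set X)} {G H : Set X} (hG : IsGcBase κ 𝒩 G) (hH : IsGcBase κ ℳ H)
    (hGH : Disjoint G H) : ∃ N ∈ 𝒩, ∃ M ∈ ℳ, Disjoint N M := by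
  let U : 𝒩 × ℳ → Set X := fun p => (closure (p.1 : Set X) ∩ closure (p.2 : Set X))ᶜ
  have : Nonempty 𝒩 := hG.nonempty.to_subtype
  have : Nonempty ℳ := hH.nonempty.to_subtype
  have mk_le : #(𝒩 × ℳ) ≤ κ := by
    simpa only [mk_prod, lift_id] using mul_le_of_le hκ hG.mk_le hH.mk_le
  have hdir : Directed (· ⊆ ·) U := fun p q => by
    obtain ⟨N, hN, hpN, hqN⟩ := hG.directedOn p.1 p.1.2 q.1 q.1.2
    obtain ⟨M, hM, hpM, hqM⟩ := hH.directedOn p.2 p.2.2 q.2 q.2.2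
    exact ⟨(⟨N, hN⟩, ⟨M, hM⟩),
      compl_subset_compl.2 (inter_subset_inter (closure_mono hpN) (closure_mono hpM)),
      compl_subset_compl.2 (inter_subset_inter (closure_mono hqN) (closure_mono hqM))⟩
  have hcov : Set.univ ⊆ ⋃ p, U p := fun x _ => by
    by_contra hx
    simp only [U, mem_iUnion, mem_compl_iff, not_exists, not_not, Prod.forall] at hx
    obtain ⟨N₀⟩ := ‹Nonempty 𝒩›
    obtain ⟨M₀⟩ := ‹Nonempty ℳ›
    exact Set.disjoint_left.1 hGH
      (hG.biInter_closure_subset (mem_iInter₂.2 fun N hN => (hx ⟨N, hN⟩ M₀).1))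
      (hH.biInter_closure_subset (mem_iInter₂.2 fun M hM => (hx N₀ ⟨M, hM⟩).2))
  obtain ⟨⟨N, M⟩, hNM⟩ := hX.exists_subset_of_directed mk_le isClosed_univ
    (fun _ => (isClosed_closure.inter isClosed_closure).isOpen_compl) hdir hcov
  exact ⟨N, N.2, M, M.2, Set.disjoint_left.2 fun x hxN hxM =>
    hNM (mem_univ x) ⟨subset_closure hxN, subset_closure hxM⟩⟩

theorem TightnessLE.exists_biInter_closure_subset (ht : TightnessLE X κ) {A G : Set X}
    (hG : IsGcKappa κ G) {x : X} (hx : x ∈ closure A) (hxG : x ∈ G) :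
    ∃ 𝒞 ∈ smallSubsets κ (smallSubsets κ A),
      x ∈ ⋂ C ∈ 𝒞, closure C ∧ ⋂ C ∈ 𝒞, closure C ⊆ G := by
  obtain ⟨ι, U, hι, hUo, hU, hU'⟩ := hG
  obtain ⟨B, hBA, hB, hxB⟩ := ht A x hx
  refine ⟨range fun i => U i ∩ B, ⟨range_subset_iff.2 fun i =>
    ⟨inter_subset_right.trans hBA, (mk_le_mk_of_subset inter_subset_right).trans hB⟩,
    mk_range_le.trans hι⟩, ?_, ?_⟩ <;> rw [biInter_range]
  · exact mem_iInter.2 fun i => (hUo i).inter_closure ⟨mem_iInter.1 (hU ▸ hxG) i, hxB⟩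
  · exact hU' ▸ iInter_mono fun i => closure_mono inter_subset_left

theorem IsSmallDetermined.exists_dense_of_subset_closure [Nonempty X] (hκ : ℵ₀ ≤ κ)
    (hμ : ℵ₀ ≤ μ) (hμκ : μ ^ κ ≤ μ) {Ψ : Set X → Set (Set X)} (hΨ : IsSmallDetermined κ μ Ψ) :
    ∃ A : Set X, #A ≤ μ ∧
      ∀ 𝒲 ∈ smallSubsets κ (Ψ A), A ⊆ closure (⋃₀ 𝒲) → Dense (⋃₀ 𝒲) := by
  have exists_escape (𝒲 : Set (Set X)) : ∃ x, x ∈ closure (⋃₀ 𝒲) → Dense (⋃₀ 𝒲) := by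
    by_contra! h
    exact (h (Classical.arbitrary X)).2 fun x => (h x).1
  choose escape hescape using exists_escape
  obtain ⟨A, hA, hescapeA⟩ := ((isSmallDetermined_image (one_le_aleph0.trans hκ) hμ escape).comp hκ
    ((isSmallDetermined_smallSubsets hμ hμκ).comp hκ hΨ)).exists_map_subset hμ hμκ
  exact ⟨A, hA, fun 𝒲 h𝒲 hA𝒲 => hescape 𝒲 (hA𝒲 (hescapeA (mem_image_of_mem escape h𝒲)))⟩

theorem WLcLE.inter_sUnion_nonempty (hκ : ℵ₀ ≤ κ) (hwlc : WLcLE X κ)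
    (hX : InitiallyCompact κ X) {F : Set X} (hF : IsClosed F) {𝒱 : Set (Set X)}
    {𝒩 : Set X → Set (Set X)} (h𝒩 : ∀ V ∈ 𝒱, IsGcBase κ (𝒩 V) V) (hF𝒱 : F ⊆ ⋃₀ 𝒱)
    (hdense : ∀ 𝒲 ∈ smallSubsets κ (⋃ V ∈ 𝒱, 𝒩 V), F ⊆ closure (⋃₀ 𝒲) → Dense (⋃₀ 𝒲))
    {G : Set X} (hG : IsGcKappa κ G) (hGne : G.Nonempty) : (G ∩ ⋃₀ 𝒱).Nonempty := by
  by_contra hG𝒱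
  rw [← not_disjoint_iff_nonempty_inter, not_not, disjoint_sUnion_right] at hG𝒱
  obtain ⟨ℳ, hℳ⟩ := hG.exists_isGcBase hκ
  have : Nonempty ℳ := hℳ.nonempty.to_subtype
  let 𝒪 : ℳ → Set (Set X) := fun M => {N ∈ ⋃ V ∈ 𝒱, 𝒩 V | Disjoint N M}
  have h𝒪 (M : ℳ) : ∀ N ∈ 𝒪 M, IsOpen N := by
    rintro N ⟨hN, -⟩
    obtain ⟨V, hV, hNV⟩ := mem_iUnion₂.1 hN
    exact (h𝒩 V hV).isOpen N hNV
  have hdir : Directed (· ⊆ ·) fun M => ⋃₀ 𝒪 M := fun M₁ M₂ => by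
    obtain ⟨M, hM, hM₁, hM₂⟩ := hℳ.directedOn M₁ M₁.2 M₂ M₂.2
    exact ⟨⟨M, hM⟩, sUnion_mono fun N hN => ⟨hN.1, hN.2.mono_right hM₁⟩,
      sUnion_mono fun N hN => ⟨hN.1, hN.2.mono_right hM₂⟩⟩
  have hF𝒪 : F ⊆ ⋃ M, ⋃₀ 𝒪 M := fun x hx => by
    obtain ⟨V, hV, hxV⟩ := hF𝒱 hx
    obtain ⟨N, hN, M, hM, hNM⟩ := (h𝒩 V hV).exists_disjoint hκ hX hℳ (hG𝒱 V hV).symm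
    exact mem_iUnion.2 ⟨⟨M, hM⟩, N, ⟨mem_biUnion hV hN, hNM⟩, (h𝒩 V hV).subset N hN hxV⟩
  obtain ⟨M, hFM⟩ := hX.exists_subset_of_directed hℳ.mk_le hF (fun M => isOpen_sUnion (h𝒪 M))
    hdir hF𝒪
  obtain ⟨𝒲, h𝒲𝒪, h𝒲, hF𝒲⟩ := hwlc F hF (𝒪 M) (h𝒪 M) hFM
  have dense_𝒲 : Dense (⋃₀ 𝒲) := hdense 𝒲 ⟨fun N hN => (h𝒲𝒪 hN).1, h𝒲⟩ hF𝒲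
  obtain ⟨y, hyM, N, hN, hyN⟩ := dense_𝒲.inter_open_nonempty M (hℳ.isOpen M M.2)
    (hGne.mono (hℳ.subset M M.2))
  exact Set.disjoint_left.1 (h𝒲𝒪 hN).2 hyN hyM

theorem TightnessLE.closure_subset_sUnion_image (ht : TightnessLE X κ) {𝒰 : Set (Set X)}
    (h𝒰 : ∀ u ∈ 𝒰, IsGcKappa κ u) (hcov : ⋃₀ 𝒰 = Set.univ) {φ : Set X → Set X}
    (hφ : ∀ T, ∀ U ∈ 𝒰, T ⊆ U → T ⊆ φ T) (A : Set X) :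
    closure A ⊆ ⋃₀ ((fun 𝒞 => φ (⋂ C ∈ 𝒞, closure C)) '' smallSubsets κ (smallSubsets κ A)) := by
  intro x hx
  obtain ⟨U, hU, hxU⟩ : x ∈ ⋃₀ 𝒰 := hcov ▸ mem_univ x
  obtain ⟨𝒞, h𝒞, hx𝒞, h𝒞U⟩ := ht.exists_biInter_closure_subset (h𝒰 U hU) hx hxU
  exact ⟨_, mem_image_of_mem _ h𝒞, hφ _ U hU h𝒞U hx𝒞⟩

end GcKappa

theorem wL_Gc_kappa_le_two_pow_general
    (κ : Cardinal.{u}) (hκ : ℵ₀ ≤ κ)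
    (X : Type u) [TopologicalSpace X]
    (hcpt : InitiallyCompact κ X) (ht : TightnessLE X κ) (hwlc : WLcLE X κ)
    (𝒰 : Set (Set X)) (h𝒰 : ∀ u ∈ 𝒰, IsGcKappa κ u) (hcov : ⋃₀ 𝒰 = Set.univ) :
    ∃ 𝒱 ⊆ 𝒰, #𝒱 ≤ 2 ^ κ ∧
      @Dense X (TopologicalSpace.generateFrom {s : Set X | IsGcKappa κ s}) (⋃₀ 𝒱) := by
  rcases isEmpty_or_nonempty X with _ | _
  · exact ⟨∅, empty_subset _, by simp, fun x => isEmptyElim x⟩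
  have hμ : ℵ₀ ≤ (2 : Cardinal.{u}) ^ κ := hκ.trans (cantor κ).le
  have hμκ : ((2 : Cardinal.{u}) ^ κ) ^ κ ≤ 2 ^ κ := by rw [← power_mul, mul_eq_self hκ]
  have h𝒰ne : 𝒰.Nonempty := nonempty_sUnion.1 (hcov ▸ univ_nonempty) |>.imp fun _ h => h.1
  choose φ hφ𝒰 hφ using exists_mem_forall_subset_of_subset h𝒰ne
  choose! 𝒩 h𝒩 using fun U hU => (h𝒰 U hU).exists_isGcBase hκ
  let V : Set (Set X) → Set X := fun 𝒞 => φ (⋂ C ∈ 𝒞, closure C)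
  have hsmall : IsSmallDetermined κ (2 ^ κ) (smallSubsets κ ∘ smallSubsets κ (α := X)) :=
    (isSmallDetermined_smallSubsets hμ hμκ).comp hκ (isSmallDetermined_smallSubsets hμ hμκ)
  obtain ⟨A, hA, hdense⟩ := ((isSmallDetermined_biUnion (one_le_aleph0.trans hκ) hμ
    fun 𝒞 => (h𝒩 (V 𝒞) (hφ𝒰 _)).mk_le.trans (cantor κ).le).comp hκ
      hsmall).exists_dense_of_subset_closure hκ hμ hμκ
  rw [Function.comp_apply, ← biUnion_image] at hdense
  refine ⟨V '' smallSubsets κ (smallSubsets κ A), image_subset_iff.2 fun _ _ => hφ𝒰 _,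
    mk_image_le.trans (hsmall.mk_le hA),
    (@IsTopologicalBasis.dense_iff X (generateFrom _) _ (isTopologicalBasis_isGcKappa hκ) _).2
      fun G hG hGne => ?_⟩
  exact hwlc.inter_sUnion_nonempty hκ hcpt isClosed_closure
    (forall_mem_image.2 fun 𝒞 _ => h𝒩 _ (hφ𝒰 _)) (ht.closure_subset_sUnion_image h𝒰 hcov hφ A)
    (fun 𝒲 h𝒲 hA𝒲 => hdense 𝒲 h𝒲 (subset_closure.trans hA𝒲)) hG hGne

/-- Let `X` be an initially `κ`-compact Hausdorff space with tightness at most `κ` and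
`wL_c(X) ≤ κ`. Then every cover of `X` by `G^c_κ` sets has a subfamily of size at most
`2^κ` whose union is dense in the topology generated by the `G^c_κ` subsets of `X`. -/
theorem wL_Gc_kappa_le_two_pow
    (κ : Cardinal.{u}) (hκ : ℵ₀ ≤ κ)
    (X : Type u) [TopologicalSpace X] [T2Space X]
    (hcpt : InitiallyCompact κ X) (ht : TightnessLE X κ) (hwlc : WLcLE X κ)
    (𝒰 : Set (Set X)) (h𝒰 : ∀ u ∈ 𝒰, IsGcKappa κ u) (hcov : ⋃₀ 𝒰 = Set.univ) :
    ∃ 𝒱 ⊆ 𝒰, #𝒱 ≤ 2 ^ κ ∧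
      @Dense X (TopologicalSpace.generateFrom {s : Set X | IsGcKappa κ s}) (⋃₀ 𝒱) :=
  wL_Gc_kappa_le_two_pow_general κ hκ X hcpt ht hwlc 𝒰 h𝒰 hcov
end

section
/- Let κ be a cardinal of uncountable cofinality and X = {α < κ : cf(α) ≤ ω} with the topology inherited from the order topology on κ. Then X is first-countable (hence has countable tightness) and countably compact, and X contains a free sequence of cardinality κ, namely the increasing enumeration of the successor ordinals below κ; hence F(X) = κ. -/
open Set Cardinal TopologicalSpace

universe u v w

/-- `Y` is countably compact: every countable open cover has a finite subcover. -/
def CountablyCompact (Y : Type v) [TopologicalSpace Y] : Prop :=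
  ∀ 𝒰 : Set (Set Y), 𝒰.Countable → (∀ u ∈ 𝒰, IsOpen u) → ⋃₀ 𝒰 = Set.univ →
    ∃ 𝒱 ⊆ 𝒰, 𝒱.Finite ∧ ⋃₀ 𝒱 = Set.univ

/-- A free sequence in `Y` indexed by a well-ordered type `ι`. -/
def IsFreeSequence (Y : Type v) [TopologicalSpace Y] (ι : Type w) [LinearOrder ι]
    (x : ι → Y) : Prop :=
  ∀ j : ι, Disjoint (closure (x '' {i | i < j})) (closure (x '' {i | j ≤ i}))

/-!
Every monotone sequence in `X` converges to its supremum, which again has countable cofinality and,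
by the uncountable cofinality of the bound, still lies in `X`. As sequences of ordinals have
monotone subsequences, `X` is sequentially compact. The successors form a free sequence because
`b + 1` cuts the ordinals into the two closed pieces `Iic b` and `Ici (b + 1)`.
-/

section CountableCofinality

open Filter Topology

theorem isCountablyGenerated_nhdsLE_of_cof_Iio_le_aleph0 {α : Type v} [LinearOrder α]
    [TopologicalSpace α] [OrderTopology α] {a : α} (ha : Order.cof (Iio a) ≤ ℵ₀) :
    (𝓝[≤] a).IsCountablyGenerated := by
  by_cases hmin : IsMin a
  · rw [hmin.Iic_eq, nhdsWithin_singleton]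
    infer_instance
  obtain ⟨s, hs, hcard⟩ := Order.exists_cof_eq (Iio a)
  have hcount : s.Countable := le_aleph0_iff_set_countable.1 (hcard.trans_le ha)
  have hbasis : (𝓝[≤] a).HasBasis (· ∈ s) fun b => Ioc (b : α) a := by
    refine (nhdsLE_basis_of_exists_lt (not_isMin_iff.1 hmin)).to_hasBasis (fun b hb => ?_)
      fun b _ => ⟨b, b.2, Subset.rfl⟩
    obtain ⟨c, hc, hbc⟩ := hs ⟨b, hb⟩
    exact ⟨c, hc, Ioc_subset_Ioc_left hbc⟩
  exact HasCountableBasis.isCountablyGenerated ⟨hbasis, hcount⟩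

theorem firstCountableTopology_of_forall_cof_le_aleph0 {X : Set Ordinal.{u}}
    (hX : ∀ a ∈ X, a.cof ≤ ℵ₀) : FirstCountableTopology X := by
  refine ⟨fun a => ?_⟩
  have hcof : Order.cof (Iio a.1) ≤ ℵ₀ := by
    rw [Ordinal.cof_Iio, ← Ordinal.lift_cof]
    exact lift_le_aleph0.2 (hX a a.2)
  have : (𝓝 a.1).IsCountablyGenerated :=
    SuccOrder.nhdsLE_eq_nhds a.1 ▸ isCountablyGenerated_nhdsLE_of_cof_Iio_le_aleph0 hcof
  rw [nhds_subtype]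
  infer_instance

theorem iSup_lt_of_countable_of_aleph0_lt_cof {ι : Type v} [Countable ι] {f : ι → Ordinal.{u}}
    {o : Ordinal.{u}} (ho : ℵ₀ < o.cof) (hf : ∀ i, f i < o) : ⨆ i, f i < o := by
  refine Ordinal.lift_iSup_lt_of_lt_cof ?_ hf
  rw [← Ordinal.lift_cof]
  exact (lift_le_aleph0.2 mk_le_aleph0).trans_lt (aleph0_lt_lift.2 ho)

theorem cof_iSup_le_aleph0_of_countable {ι : Type v} [Countable ι] {f : ι → Ordinal.{u}}
    (hf : ∀ i, (f i).cof ≤ ℵ₀) : (⨆ i, f i).cof ≤ ℵ₀ := by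
  by_contra! hcof
  have hlt : ∀ i, f i < ⨆ i, f i := fun i =>
    (Ordinal.le_iSup f i).lt_of_ne fun h => (hf i).not_gt (h ▸ hcof)
  exact (iSup_lt_of_countable_of_aleph0_lt_cof hcof hlt).false

theorem isSeqCompact_of_isPWO_of_exists_isLUB {α : Type v} [Preorder α] [TopologicalSpace α]
    [SupConvergenceClass α] {s : Set α} (hs : s.IsPWO)
    (hlub : ∀ f : ℕ → α, Monotone f → (∀ n, f n ∈ s) → ∃ a ∈ s, IsLUB (range f) a) :
    IsSeqCompact s := by
  intro x hx
  obtain ⟨φ, hφ⟩ := hs.exists_monotone_subseq hx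
  obtain ⟨a, ha, hxa⟩ := hlub (x ∘ φ) hφ fun n => hx (φ n)
  exact ⟨a, ha, φ, φ.strictMono, tendsto_atTop_isLUB hφ hxa⟩

theorem isSeqCompact_setOf_lt_and_cof_le_aleph0 {o : Ordinal.{u}} (ho : ℵ₀ < o.cof) :
    IsSeqCompact {α : Ordinal.{u} | α < o ∧ α.cof ≤ ℵ₀} := by
  refine isSeqCompact_of_isPWO_of_exists_isLUB (IsWF.of_wellFoundedLT _).isPWO fun f _ hf => ?_
  exact ⟨⨆ n, f n,
    ⟨iSup_lt_of_countable_of_aleph0_lt_cof ho fun n => (hf n).1,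
      cof_iSup_le_aleph0_of_countable fun n => (hf n).2⟩,
    isLUB_ciSup (Ordinal.bddAbove_of_small)⟩

end CountableCofinality

theorem countablyCompact_of_countablyCompactSpace {Y : Type v} [TopologicalSpace Y]
    [CountablyCompactSpace Y] : CountablyCompact Y := by
  intro 𝒰 hcount hopen hcover
  obtain ⟨𝒱, hsub, hfin, hcover'⟩ :=
    CountablyCompactSpace.isCountablyCompact_univ.elim_finite_subcover_image hcount hopen
      (by rw [← sUnion_eq_biUnion, hcover])
  exact ⟨𝒱, hsub, hfin, univ_subset_iff.1 (sUnion_eq_biUnion ▸ hcover')⟩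

namespace IsFreeSequence

variable {Y : Type v} [TopologicalSpace Y] {ι : Type w} [LinearOrder ι] {x : ι → Y}

theorem injective (hx : IsFreeSequence Y ι x) : Function.Injective x :=
  Function.Injective.of_lt_imp_ne fun i j hij h =>
    (hx j).notMem_of_mem_left (subset_closure ⟨i, hij, rfl⟩) (subset_closure ⟨j, le_rfl, h.symm⟩)

theorem of_continuous_comp {Z : Type*} [TopologicalSpace Z] {g : Y → Z} (hg : Continuous g)
    (hgx : IsFreeSequence Z ι (g ∘ x)) : IsFreeSequence Y ι x := by
  intro j
  have hmaps : ∀ A : Set ι, MapsTo g (closure (x '' A)) (closure (g ∘ x '' A)) := fun A => by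
    rw [image_comp]
    exact (mapsTo_image g _).closure hg
  exact ((hgx j).preimage g).mono (hmaps _) (hmaps _)

theorem of_strictMono_of_not_isSuccPrelimit [LinearOrder Y] [OrderClosedTopology Y]
    (hx : StrictMono x) (hlim : ∀ i, ¬Order.IsSuccPrelimit (x i)) : IsFreeSequence Y ι x := by
  intro j
  obtain ⟨b, hb⟩ := Order.not_isSuccPrelimit_iff.1 (hlim j)
  have hlower : closure (x '' {i | i < j}) ⊆ Iic b :=
    closure_minimal (image_subset_iff.2 fun _ hi => hb.le_of_lt (hx hi)) isClosed_Iic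
  have hupper : closure (x '' {i | j ≤ i}) ⊆ Ici (x j) :=
    closure_minimal (image_subset_iff.2 fun _ hi => hx.monotone hi) isClosed_Ici
  exact (Iic_disjoint_Ici.2 hb.lt.not_ge).mono hlower hupper

end IsFreeSequence

theorem isFreeSequence_of_coe_eq_add_one {X : Set Ordinal.{u}} {ι : Type w} [LinearOrder ι]
    {f : ι → Ordinal.{u}} (hf : StrictMono f) {x : ι → X}
    (hx : ∀ i, (x i : Ordinal) = f i + 1) : IsFreeSequence X ι x := by
  have hsucc : Subtype.val ∘ x = (f · + 1) := funext hx
  refine .of_continuous_comp continuous_subtype_val (hsucc ▸ ?_)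
  exact .of_strictMono_of_not_isSuccPrelimit (Order.succ_strictMono.comp hf)
    fun i => Order.not_isSuccPrelimit_add_one (f i)

theorem free_sequence_in_countable_cofinality_ordinals_general
    (o : Ordinal.{u}) (hcf : ℵ₀ < o.cof)
    (X : Set Ordinal.{u}) (hX : X = {α | α < o ∧ α.cof ≤ ℵ₀}) :
    FirstCountableTopology ↥X ∧
    CountablyCompact ↥X ∧
    (∃ (ι : Type u) (_ : LinearOrder ι) (x : ι → ↥X),
      (∀ i j : ι, i < j ∨ i = j ∨ j < i) ∧ WellFoundedLT ι ∧
      IsFreeSequence ↥X ι x ∧ #ι = o.card) ∧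
    (∀ (ι : Type (u + 1)) [LinearOrder ι], WellFoundedLT ι →
      ∀ x : ι → ↥X, IsFreeSequence ↥X ι x → #ι ≤ Cardinal.lift.{u + 1} o.card) := by
  subst hX
  have hlim : Order.IsSuccLimit o := Ordinal.one_lt_cof_iff.1 (one_lt_aleph0.trans hcf)
  let e := (Ordinal.ToType.mk (o := o)).symm
  refine ⟨firstCountableTopology_of_forall_cof_le_aleph0 fun _ ha => ha.2, ?_,
    ⟨o.ToType, inferInstance, fun i => ⟨(e i).1 + 1, hlim.add_one_lt (e i).2, ?_⟩,
      lt_trichotomy, inferInstance, ?_, mk_toType o⟩, fun ι _ _ x hx => ?_⟩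
  · have := isCountablyCompact_iff_countablyCompactSpace.1
      (isSeqCompact_setOf_lt_and_cof_le_aleph0 hcf).isCountablyCompact
    exact countablyCompact_of_countablyCompactSpace
  · exact (Ordinal.cof_add_one _).trans_le one_le_aleph0
  · exact isFreeSequence_of_coe_eq_add_one (f := fun i => (e i).1)
      (fun _ _ hij => e.strictMono hij) fun _ => rfl
  · calc #ι ≤ #{α | α < o ∧ α.cof ≤ ℵ₀} := mk_le_of_injective hx.injective
      _ ≤ #(Iio o) := mk_le_mk_of_subset fun _ ha => ha.1
      _ = Cardinal.lift.{u + 1} o.card := mk_Iio_ordinal o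

/-- Let `κ` be a cardinal of uncountable cofinality and
`X = {α < κ : cf(α) ≤ ω}` with the topology inherited from the order topology on the
ordinals below `κ`. Then `X` is first countable (hence of countable tightness), countably
compact, and contains a free sequence of cardinality `κ` while every free sequence in `X`
has cardinality at most `κ`; hence `F(X) = κ`. -/
theorem free_sequence_in_countable_cofinality_ordinals
    (κ : Cardinal.{u}) (hcf : ℵ₀ < κ.ord.cof)
    (X : Set Ordinal.{u}) (hX : X = {α | α < κ.ord ∧ α.cof ≤ ℵ₀}) :
    FirstCountableTopology ↥X ∧
    CountablyCompact ↥X ∧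
    (∃ (ι : Type u) (_ : LinearOrder ι) (x : ι → ↥X),
      (∀ i j : ι, i < j ∨ i = j ∨ j < i) ∧ WellFoundedLT ι ∧
      IsFreeSequence ↥X ι x ∧ #ι = κ) ∧
    (∀ (ι : Type (u + 1)) [LinearOrder ι], WellFoundedLT ι →
      ∀ x : ι → ↥X, IsFreeSequence ↥X ι x → #ι ≤ Cardinal.lift.{u + 1} κ) := by
  simpa only [card_ord] using
    free_sequence_in_countable_cofinality_ordinals_general κ.ord hcf X hX
end
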